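/- Let r > r₀ > 0 and let P ⊂ ℝ² be a finite set with circumradius r₀ such that conv_r P is nonempty. Then the perimeters satisfy: perimeter(conv_r P) + perimeter(P^r) = perimeter of a disk of radius r, i.e. 2πr; equivalently V₁(B²[o,r]) = V₁(conv_r P) + V₁(P^r). -/

import Mathlib

open Metric Set MeasureTheory Pointwise RealInnerProductSpace

variable {d : ℕ}

/-- The `r`-ball body generated by `X`: the intersection of all closed balls of
radius `r` centered at points of `X`. -/
def ballBody (r : ℝ) (X : Set (EuclideanSpace ℝ (Fin d))) :
    Set (EuclideanSpace ℝ (Fin d)) :=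
  ⋂ x ∈ X, closedBall x r

/-- The `r`-ball convex hull of `X`: the intersection of all closed balls of
radius `r` containing `X`. -/
def ballHull (r : ℝ) (X : Set (EuclideanSpace ℝ (Fin d))) :
    Set (EuclideanSpace ℝ (Fin d)) :=
  ⋂ y ∈ {y : EuclideanSpace ℝ (Fin d) | X ⊆ closedBall y r}, closedBall y r

/-- Volume of the m-dimensional unit ball. -/
noncomputable def unitBallVol (m : ℕ) : ℝ :=
  (volume (closedBall (0 : EuclideanSpace ℝ (Fin m)) 1)).toReal

/-- `V` is a system of intrinsic volumes on `ℝ^d`, i.e. it satisfies the Steiner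
formula for all convex bodies. -/
def IsIntrinsicVolumes (d : ℕ)
    (V : ℕ → Set (EuclideanSpace ℝ (Fin d)) → ℝ) : Prop :=
  ∀ A : Set (EuclideanSpace ℝ (Fin d)), Convex ℝ A → IsCompact A → A.Nonempty →
    (∀ ε : ℝ, 0 < ε →
      (volume (A + ε • closedBall (0 : EuclideanSpace ℝ (Fin d)) 1)).toReal =
        ∑ i ∈ Finset.range (d + 1), unitBallVol (d - i) * V i A * ε ^ (d - i)) ∧
    V 0 A = 1

/-!
The set `P^r` is an intersection of balls of radius `r`, hence so strongly convex that if `y`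
minimizes `⟪u, ·⟫` on `P^r` for a unit vector `u`, then `P^r` lies in the ball of radius `r` about
`y + r u`. Thus `y + r u ∈ conv_r P`, so `conv_r P - P^r` contains every `r u`; being convex and
contained in `B[o, r]`, it equals `B[o, r]`.

`V₁` is additive under Minkowski sums because the Steiner formula makes `κ_{d-1} V₁(K)` the right
derivative at `t = 0` of the volume of `B[o, 1] + t K`. Up to `O(t²)` this set has radial function
`1 + t h_K`, so in polar coordinates the derivative is the integral over the sphere of the support
function `h_K`, which is additive in `K`.
-/

open Filter Topology

section Calculus

theorem hasDerivWithinAt_of_le_of_le {f g h : ℝ → ℝ} {s : Set ℝ} {a c : ℝ}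
    (hf : HasDerivWithinAt f c s a) (hh : HasDerivWithinAt h c s a)
    (hfg : f ≤ᶠ[𝓝[s] a] g) (hgh : g ≤ᶠ[𝓝[s] a] h) (hfa : f a = g a) (hha : h a = g a) :
    HasDerivWithinAt g c s a := by
  rw [hasDerivWithinAt_iff_isLittleO] at *
  refine Asymptotics.IsBigO.trans_isLittleO (.of_norm_eventuallyLE ?_)
    (hf.norm_left.add hh.norm_left)
  filter_upwards [hfg, hgh] with t hft hth
  rw [← hfa, hfa, hha]
  simp only [Real.norm_eq_abs]
  grind

theorem hasDerivAt_integral_of_continuous {X : Type*} [TopologicalSpace X] [CompactSpace X]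
    [MeasurableSpace X] [OpensMeasurableSpace X] {μ : Measure X} [IsFiniteMeasureOnCompacts μ]
    {F F' : ℝ → X → ℝ} (hF : ∀ t, Continuous (F t)) (hF' : Continuous F'.uncurry)
    (hderiv : ∀ t x, HasDerivAt (F · x) (F' t x) t) (t₀ : ℝ) :
    HasDerivAt (fun t ↦ ∫ x, F t x ∂μ) (∫ x, F' t₀ x ∂μ) t₀ := by
  obtain ⟨C, hC⟩ := ((isCompact_closedBall t₀ 1).prod isCompact_univ).exists_bound_of_continuousOn
    hF'.continuousOn
  have hF'₀ : Continuous (F' t₀) := hF'.comp (by fun_prop : Continuous fun x ↦ (t₀, x))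
  exact (hasDerivAt_integral_of_dominated_loc_of_deriv_le (bound := fun _ ↦ C)
    (closedBall_mem_nhds t₀ one_pos)
    (.of_forall fun t ↦ (hF t).aestronglyMeasurable_of_compactSpace)
    ((hF t₀).integrable_of_hasCompactSupport (.of_compactSpace _))
    hF'₀.aestronglyMeasurable
    (.of_forall fun x t ht ↦ hC (t, x) ⟨ht, mem_univ x⟩)
    (continuous_const.integrable_of_hasCompactSupport (.of_compactSpace _))
    (.of_forall fun x t _ ↦ hderiv t x)).2

end Calculus

section SupportFunction

variable {E : Type*} [NormedAddCommGroup E] [InnerProductSpace ℝ E] {K L : Set E} {u : E}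

/-- The support function `h_K(u) = sup {⟪u, x⟫ | x ∈ K}` of a set `K`. -/
noncomputable def supportFunction (K : Set E) (u : E) : ℝ :=
  sSup ((fun x ↦ ⟪u, x⟫) '' K)

theorem continuous_supportFunction (hK : IsCompact K) : Continuous (supportFunction K) :=
  hK.continuous_sSup (f := fun u x : E ↦ ⟪u, x⟫) (by fun_prop)

theorem exists_inner_eq_supportFunction (hK : IsCompact K) (hne : K.Nonempty) (u : E) :
    ∃ a ∈ K, ⟪u, a⟫ = supportFunction K u := by
  obtain ⟨a, ha, h⟩ := hK.exists_sSup_image_eq hne (f := fun x ↦ ⟪u, x⟫) (by fun_prop)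
  exact ⟨a, ha, h.symm⟩

theorem inner_le_supportFunction (hK : IsCompact K) {x : E} (hx : x ∈ K) :
    ⟪u, x⟫ ≤ supportFunction K u :=
  le_csSup (hK.bddAbove_image (by fun_prop)) (mem_image_of_mem _ hx)

theorem supportFunction_add (hK : IsCompact K) (hKne : K.Nonempty) (hL : IsCompact L)
    (hLne : L.Nonempty) :
    supportFunction (K + L) u = supportFunction K u + supportFunction L u := by
  have himage : (fun x ↦ ⟪u, x⟫) '' (K + L) = (fun x ↦ ⟪u, x⟫) '' K + (fun x ↦ ⟪u, x⟫) '' L :=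
    image_image2_distrib fun x y ↦ inner_add_right u x y
  rw [supportFunction, himage, csSup_add (hKne.image _) (hK.bddAbove_image (by fun_prop))
    (hLne.image _) (hL.bddAbove_image (by fun_prop))]
  rfl

theorem abs_supportFunction_le {R : ℝ} (hK : IsCompact K) (hne : K.Nonempty)
    (hR : ∀ x ∈ K, ‖x‖ ≤ R) : |supportFunction K u| ≤ ‖u‖ * R := by
  obtain ⟨a, ha, hau⟩ := exists_inner_eq_supportFunction hK hne u
  rw [← hau]
  grw [abs_real_inner_le_norm, hR a ha]

end SupportFunction

section PolarVolume

variable {E : Type*} [NormedAddCommGroup E] [NormedSpace ℝ E]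

/-- The open star-shaped region about the origin with radial function `f`. The origin itself is
left out, so that the polar homeomorphism `homeomorphUnitSphereProd` applies to the region. -/
def starRegion (f : sphere (0 : E) 1 → ℝ) : Set E :=
  {x | ∃ u : sphere (0 : E) 1, ∃ s ∈ Ioo 0 (f u), x = s • (u : E)}

theorem starRegion_eq_image (f : sphere (0 : E) 1 → ℝ) :
    starRegion f = (↑) '' (homeomorphUnitSphereProd E ⁻¹' {p | (p.2 : ℝ) < f p.1}) := by
  rw [← Homeomorph.image_symm, image_image]
  ext x
  constructor
  · rintro ⟨u, s, ⟨hs, hsf⟩, rfl⟩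
    exact ⟨(u, ⟨s, hs⟩), hsf, by simp⟩
  · rintro ⟨⟨u, s, hs⟩, hsf, rfl⟩
    exact ⟨u, s, ⟨hs, hsf⟩, by simp⟩

theorem mem_starRegion_of_norm_lt {f : sphere (0 : E) 1 → ℝ} {x : E} (hx : x ≠ 0)
    (h : ∀ u : sphere (0 : E) 1, x = ‖x‖ • (u : E) → ‖x‖ < f u) : x ∈ starRegion f := by
  have hx' : ‖x‖ ≠ 0 := norm_ne_zero_iff.2 hx
  let u : sphere (0 : E) 1 := ⟨‖x‖⁻¹ • x, by simp [norm_smul, hx']⟩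
  have hxu : x = ‖x‖ • (u : E) := by simp [u, smul_smul, hx']
  exact ⟨u, ‖x‖, ⟨norm_pos_iff.2 hx, h u hxu⟩, hxu⟩

theorem isBounded_starRegion {f : sphere (0 : E) 1 → ℝ} (hf : BddAbove (range f)) :
    Bornology.IsBounded (starRegion f) := by
  obtain ⟨C, hC⟩ := hf
  refine isBounded_ball.subset (t := ball 0 C) ?_
  rintro _ ⟨u, s, ⟨hs, hsf⟩, rfl⟩
  simpa [norm_smul, abs_of_pos hs] using hsf.trans_le (hC (mem_range_self u))

variable [FiniteDimensional ℝ E] [MeasurableSpace E] [BorelSpace E] (μ : Measure E)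
  [μ.IsAddHaarMeasure]

theorem measure_starRegion {f : sphere (0 : E) 1 → ℝ} (hf : Measurable f) (hpos : ∀ u, 0 < f u) :
    μ (starRegion f) = ∫⁻ u, .ofReal (f u ^ Module.finrank ℝ E / Module.finrank ℝ E)
      ∂μ.toSphere := by
  have hT : MeasurableSet {p : sphere (0 : E) 1 × Ioi (0 : ℝ) | (p.2 : ℝ) < f p.1} :=
    measurableSet_lt (by fun_prop) (by fun_prop)
  rw [starRegion_eq_image, ← comap_subtype_coe_apply (measurableSet_singleton _).compl,
    μ.measurePreserving_homeomorphUnitSphereProd.measure_preimage hT.nullMeasurableSet,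
    Measure.prod_apply hT]
  refine lintegral_congr fun u ↦ ?_
  have : Nontrivial E := ⟨u, 0, ne_zero_of_mem_unit_sphere u⟩
  have hslice : Prod.mk u ⁻¹' {p : sphere (0 : E) 1 × Ioi (0 : ℝ) | (p.2 : ℝ) < f p.1}
      = Iio (⟨f u, hpos u⟩ : Ioi (0 : ℝ)) := rfl
  rw [hslice, Measure.volumeIoiPow_apply_Iio, Nat.sub_add_cancel Module.finrank_pos,
    Nat.cast_pred Module.finrank_pos, sub_add_cancel]

theorem measureReal_starRegion {f : sphere (0 : E) 1 → ℝ} (hf : Measurable f)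
    (hpos : ∀ u, 0 < f u) :
    μ.real (starRegion f) = (∫ u, f u ^ Module.finrank ℝ E ∂μ.toSphere) / Module.finrank ℝ E := by
  rw [measureReal_def, measure_starRegion μ hf hpos, ← integral_eq_lintegral_of_nonneg_ae
    (.of_forall fun u ↦ by have := hpos u; positivity) (by fun_prop), integral_div]

theorem measureReal_starRegion_one [Nontrivial E] :
    μ.real (starRegion fun _ : sphere (0 : E) 1 ↦ 1) = μ.real (closedBall 0 1) := by
  rw [measureReal_starRegion μ measurable_const fun _ ↦ one_pos, measureReal_def μ (closedBall 0 1),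
    Measure.addHaar_closedBall_eq_addHaar_ball, ← measureReal_def]
  simp [Module.finrank_pos.ne']

-- The quadratic term leaves the derivative unchanged, but gives room for one-sided bounds.
theorem hasDerivAt_measureReal_starRegion [Nontrivial E] {h : sphere (0 : E) 1 → ℝ}
    (hh : Continuous h) (c : ℝ) :
    HasDerivAt (fun t : ℝ ↦ μ.real (starRegion fun u ↦ 1 + t * h u + c * t ^ 2))
      (∫ u, h u ∂μ.toSphere) 0 := by
  have hpos : ∀ᶠ t : ℝ in 𝓝 0, ∀ u ∈ univ, 0 < 1 + t * h u + c * t ^ 2 :=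
    isCompact_univ.eventually_forall_of_forall_eventually fun u _ ↦
      (by fun_prop : Continuous fun p : ℝ × sphere (0 : E) 1 ↦ 1 + p.1 * h p.2 + c * p.1 ^ 2)
        |>.continuousAt.eventually_const_lt (by simp)
  have hfinrank : (Module.finrank ℝ E : ℝ) ≠ 0 := mod_cast Module.finrank_pos.ne'
  have hderiv (t : ℝ) (u : sphere (0 : E) 1) : HasDerivAt
      (fun t ↦ (1 + t * h u + c * t ^ 2) ^ Module.finrank ℝ E)
      (Module.finrank ℝ E * (1 + t * h u + c * t ^ 2) ^ (Module.finrank ℝ E - 1)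
        * (h u + c * (2 * t))) t := by
    simpa using ((((hasDerivAt_id t).mul_const (h u)).const_add 1).add
      ((hasDerivAt_pow 2 t).const_mul c)).fun_pow (Module.finrank ℝ E)
  have hintegral := (hasDerivAt_integral_of_continuous (μ := μ.toSphere) (fun t ↦ by fun_prop)
    (by fun_prop) hderiv 0).div_const (Module.finrank ℝ E : ℝ)
  simp only [zero_mul, add_zero, mul_zero, one_pow, mul_one, ne_eq, OfNat.ofNat_ne_zero,
    not_false_eq_true, zero_pow, integral_const_mul, mul_div_cancel_left₀ _ hfinrank] at hintegral
  refine hintegral.congr_of_eventuallyEq ?_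
  filter_upwards [hpos] with t ht
  exact measureReal_starRegion μ (by fun_prop) fun u ↦ ht u (mem_univ u)

end PolarVolume

section ParallelVolume

variable {E : Type*} [NormedAddCommGroup E] [InnerProductSpace ℝ E] {K : Set E} {R t : ℝ}

theorem starRegion_subset_closedBall_add_smul (hK : IsCompact K) (hne : K.Nonempty)
    (hR : ∀ x ∈ K, ‖x‖ ≤ R) (ht : 0 ≤ t) (htR : t * R ≤ 1 / 2) :
    starRegion (fun u ↦ 1 + t * supportFunction K u - (t * R) ^ 2) ⊆ closedBall 0 1 + t • K := by
  rintro _ ⟨u, s, ⟨hs, hsu⟩, rfl⟩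
  obtain ⟨a, ha, hau⟩ := exists_inner_eq_supportFunction hK hne (u : E)
  refine ⟨s • u - t • a, ?_, t • a, smul_mem_smul_set ha, sub_add_cancel _ _⟩
  have hu : ‖(u : E)‖ = 1 := norm_eq_of_mem_sphere u
  have hh : supportFunction K (u : E) ≤ R := by
    simpa [hu] using (abs_le.1 (abs_supportFunction_le (u := (u : E)) hK hne hR)).2
  have hta : t * ‖a‖ ≤ t * R := by gcongr; exact hR a ha
  have hth : t * supportFunction K (u : E) ≤ t * R := by gcongr
  have htR_nonneg : 0 ≤ t * R := hta.trans' (by positivity)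
  have hsq_le : (t * R) ^ 2 ≤ t * R / 2 := by nlinarith
  have hsq : (s - t * supportFunction K (u : E)) ^ 2 ≤ (1 - (t * R) ^ 2) ^ 2 :=
    sq_le_sq' (by linarith) (by linarith)
  rw [mem_closedBall_zero_iff, ← sq_le_one_iff₀ (norm_nonneg _)]
  calc ‖s • (u : E) - t • a‖ ^ 2
      = (s - t * supportFunction K (u : E)) ^ 2 + (t * ‖a‖) ^ 2
          - (t * supportFunction K (u : E)) ^ 2 := by
        rw [norm_sub_sq_real, real_inner_smul_left, real_inner_smul_right, hau, norm_smul,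
          norm_smul, hu, Real.norm_of_nonneg hs.le, Real.norm_of_nonneg ht]
        ring
    _ ≤ (1 - (t * R) ^ 2) ^ 2 + (t * R) ^ 2 - 0 := by gcongr; positivity
    _ ≤ 1 := by nlinarith [sq_nonneg (t * R)]

theorem closedBall_add_smul_subset_insert_starRegion (hK : IsCompact K) (ht : 0 ≤ t)
    {f : sphere (0 : E) 1 → ℝ} (hf : ∀ u : sphere (0 : E) 1, 1 + t * supportFunction K u < f u) :
    closedBall 0 1 + t • K ⊆ insert 0 (starRegion f) := by
  rintro _ ⟨b, hb, _, ⟨a, ha, rfl⟩, rfl⟩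
  rcases eq_or_ne (b + t • a) 0 with hzero | hne
  · exact .inl hzero
  refine .inr (mem_starRegion_of_norm_lt hne fun u hu ↦ ?_)
  have hu_norm : ‖(u : E)‖ = 1 := norm_eq_of_mem_sphere u
  calc ‖b + t • a‖ = ⟪(u : E), ‖b + t • a‖ • (u : E)⟫ := by
        simp [real_inner_smul_right]
    _ = ⟪(u : E), b⟫ + t * ⟪(u : E), a⟫ := by
        rw [← hu, inner_add_right, real_inner_smul_right]
    _ ≤ 1 + t * supportFunction K u := by
        gcongr
        · grw [real_inner_le_norm, hu_norm, one_mul, mem_closedBall_zero_iff.1 hb]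
        · exact inner_le_supportFunction hK ha
    _ < f u := hf u

variable [FiniteDimensional ℝ E] [Nontrivial E] [MeasurableSpace E] [BorelSpace E]
  (μ : Measure E) [μ.IsAddHaarMeasure]

theorem hasDerivWithinAt_measureReal_closedBall_add_smul (hK : IsCompact K) (hne : K.Nonempty) :
    HasDerivWithinAt (fun t : ℝ ↦ μ.real (closedBall 0 1 + t • K))
      (∫ u : sphere (0 : E) 1, supportFunction K u ∂μ.toSphere) (Ioi 0) 0 := by
  obtain ⟨R, hRpos, hR⟩ := hK.isBounded.exists_pos_norm_le
  have hcont : Continuous fun u : sphere (0 : E) 1 ↦ supportFunction K u :=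
    (continuous_supportFunction hK).comp continuous_subtype_val
  have hzero (c : ℝ) : μ.real (starRegion fun u : sphere (0 : E) 1 ↦
      1 + 0 * supportFunction K u + c * 0 ^ 2) = μ.real (closedBall 0 1 + (0 : ℝ) • K) := by
    simp [zero_smul_set hne, ← measureReal_starRegion_one]
  have hsmall : ∀ᶠ t : ℝ in 𝓝[>] 0, 0 < t ∧ t * R ≤ 1 / 2 := by
    filter_upwards [Ioc_mem_nhdsGT (by positivity : (0 : ℝ) < 1 / 2 / R)] with t ht
    exact ⟨ht.1, (le_div_iff₀ hRpos).1 ht.2⟩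
  refine hasDerivWithinAt_of_le_of_le
    (hasDerivAt_measureReal_starRegion μ hcont (-R ^ 2)).hasDerivWithinAt
    (hasDerivAt_measureReal_starRegion μ hcont 1).hasDerivWithinAt ?_ ?_ (hzero _) (hzero _)
  · filter_upwards [hsmall] with t ⟨ht, htR⟩
    refine measureReal_mono ?_ ((isCompact_closedBall 0 1).add (hK.smul t)).measure_ne_top
    convert! starRegion_subset_closedBall_add_smul hK hne hR ht.le htR using 3
    ring
  · filter_upwards [self_mem_nhdsWithin] with t (ht : 0 < t)
    rw [← measureReal_congr (insert_ae_eq_self 0 (starRegion _))]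
    have hfinite := (isBounded_starRegion
      (isCompact_range (by fun_prop : Continuous fun u : sphere (0 : E) 1 ↦
        1 + t * supportFunction K u + 1 * t ^ 2)).bddAbove).insert 0
    refine measureReal_mono ?_ hfinite.measure_lt_top.ne
    exact closedBall_add_smul_subset_insert_starRegion hK ht.le fun u ↦
      lt_add_of_pos_right _ (by positivity)

end ParallelVolume

theorem unitBallVol_pos (m : ℕ) : 0 < unitBallVol m :=
  ENNReal.toReal_pos (measure_closedBall_pos _ _ one_pos).ne' measure_closedBall_lt_top.ne

namespace IsIntrinsicVolumes

variable {V : ℕ → Set (EuclideanSpace ℝ (Fin d)) → ℝ} {K L : Set (EuclideanSpace ℝ (Fin d))}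

theorem measureReal_closedBall_add_smul (hV : IsIntrinsicVolumes d V) (hKc : Convex ℝ K)
    (hK : IsCompact K) (hne : K.Nonempty) {t : ℝ} (ht : 0 < t) :
    volume.real (closedBall 0 1 + t • K) =
      ∑ i ∈ Finset.range (d + 1), unitBallVol (d - i) * V i K * t ^ i := by
  have hscale : closedBall 0 1 + t • K = t • (K + t⁻¹ • closedBall 0 1) := by
    rw [smul_add, smul_inv_smul₀ ht.ne', add_comm]
  rw [hscale, measureReal_def, Measure.addHaar_smul_of_nonneg _ ht.le, ENNReal.toReal_mul,
    (hV K hKc hK hne).1 _ (inv_pos.2 ht), finrank_euclideanSpace_fin,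
    ENNReal.toReal_ofReal (by positivity), Finset.mul_sum]
  refine Finset.sum_congr rfl fun i hi ↦ ?_
  have hpow : t ^ d = t ^ i * t ^ (d - i) := by
    rw [← pow_add, Nat.add_sub_cancel' (Finset.mem_range_succ_iff.1 hi)]
  rw [hpow, inv_pow]
  field_simp

theorem hasDerivWithinAt_measureReal_closedBall_add_smul [NeZero d] (hV : IsIntrinsicVolumes d V)
    (hKc : Convex ℝ K) (hK : IsCompact K) (hne : K.Nonempty) :
    HasDerivWithinAt (fun t : ℝ ↦ volume.real (closedBall 0 1 + t • K))
      (unitBallVol (d - 1) * V 1 K) (Ioi 0) 0 := by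
  have hpoly : HasDerivAt
      (fun t : ℝ ↦ ∑ i ∈ Finset.range (d + 1), unitBallVol (d - i) * V i K * t ^ i)
      (∑ i ∈ Finset.range (d + 1), unitBallVol (d - i) * V i K * (i * 0 ^ (i - 1))) 0 :=
    .fun_sum fun i _ ↦ (hasDerivAt_pow i 0).const_mul _
  rw [Finset.sum_eq_single_of_mem 1 (by simp [NeZero.pos]) fun i _ hi ↦ by
    rcases Nat.eq_zero_or_pos i with rfl | hpos
    · simp
    · simp [show i - 1 ≠ 0 by omega]] at hpoly
  simp only [Nat.cast_one, Nat.sub_self, pow_zero, mul_one] at hpoly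
  refine hpoly.hasDerivWithinAt.congr (fun t ht ↦ ?_) ?_
  · exact hV.measureReal_closedBall_add_smul hKc hK hne ht
  · rw [Finset.sum_eq_single_of_mem 0 (by simp) fun i _ hi ↦ by simp [hi], (hV K hKc hK hne).2]
    simp [zero_smul_set hne, unitBallVol, measureReal_def]

theorem unitBallVol_mul_apply_one [NeZero d] (hV : IsIntrinsicVolumes d V)
    (hKc : Convex ℝ K) (hK : IsCompact K) (hne : K.Nonempty) :
    unitBallVol (d - 1) * V 1 K =
      ∫ u : sphere (0 : EuclideanSpace ℝ (Fin d)) 1, supportFunction K u ∂volume.toSphere :=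
  (uniqueDiffWithinAt_Ioi 0).eq_deriv _
    (hV.hasDerivWithinAt_measureReal_closedBall_add_smul hKc hK hne)
    (_root_.hasDerivWithinAt_measureReal_closedBall_add_smul volume hK hne)

theorem apply_one_add [NeZero d] (hV : IsIntrinsicVolumes d V) (hKc : Convex ℝ K)
    (hK : IsCompact K) (hKne : K.Nonempty) (hLc : Convex ℝ L) (hL : IsCompact L)
    (hLne : L.Nonempty) : V 1 (K + L) = V 1 K + V 1 L := by
  have hintegrable {M : Set (EuclideanSpace ℝ (Fin d))} (hM : IsCompact M) :
      Integrable (fun u : sphere (0 : EuclideanSpace ℝ (Fin d)) 1 ↦ supportFunction M u)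
        volume.toSphere :=
    ((continuous_supportFunction hM).comp continuous_subtype_val).integrable_of_hasCompactSupport
      (.of_compactSpace _)
  refine mul_left_cancel₀ (unitBallVol_pos (d - 1)).ne' ?_
  rw [mul_add, hV.unitBallVol_mul_apply_one (hKc.add hLc) (hK.add hL) (hKne.add hLne),
    hV.unitBallVol_mul_apply_one hKc hK hKne, hV.unitBallVol_mul_apply_one hLc hL hLne,
    ← integral_add (hintegrable hK) (hintegrable hL)]
  simp only [supportFunction_add hK hKne hL hLne]

theorem apply_one_neg [NeZero d] (hV : IsIntrinsicVolumes d V) (hKc : Convex ℝ K)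
    (hK : IsCompact K) (hne : K.Nonempty) : V 1 (-K) = V 1 K := by
  refine mul_left_cancel₀ (unitBallVol_pos (d - 1)).ne' ((uniqueDiffWithinAt_Ioi 0).eq_deriv _
    (hV.hasDerivWithinAt_measureReal_closedBall_add_smul hKc.neg hK.neg hne.neg) ?_)
  have hneg (t : ℝ) : closedBall 0 1 + t • -K = -(closedBall 0 1 + t • K) := by
    rw [neg_add, neg_closedBall, neg_zero, smul_set_neg]
  simp only [hneg, measureReal_def, Measure.measure_neg]
  exact hV.hasDerivWithinAt_measureReal_closedBall_add_smul hKc hK hne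

theorem apply_one_sub [NeZero d] (hV : IsIntrinsicVolumes d V) (hKc : Convex ℝ K)
    (hK : IsCompact K) (hKne : K.Nonempty) (hLc : Convex ℝ L) (hL : IsCompact L)
    (hLne : L.Nonempty) : V 1 (K - L) = V 1 K + V 1 L := by
  rw [sub_eq_add_neg, hV.apply_one_add hKc hK hKne hLc.neg hL.neg hLne.neg,
    hV.apply_one_neg hLc hL hLne]

end IsIntrinsicVolumes

section BallBody

theorem dist_lineMap_sq {F : Type*} [NormedAddCommGroup F] [InnerProductSpace ℝ F] (x y c : F)
    (s : ℝ) : dist (AffineMap.lineMap x y s) c ^ 2 =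
      (1 - s) * dist x c ^ 2 + s * dist y c ^ 2 - s * (1 - s) * dist x y ^ 2 := by
  have hsub : AffineMap.lineMap x y s - c = (1 - s) • (x - c) + s • (y - c) := by
    rw [AffineMap.lineMap_apply_module]
    module
  simp only [dist_eq_norm]
  rw [hsub, ← sub_sub_sub_cancel_right x y c, norm_add_sq_real,
    norm_sub_sq_real (x - c) (y - c), norm_smul, norm_smul, real_inner_smul_left,
    real_inner_smul_right, mul_pow, mul_pow, Real.norm_eq_abs, Real.norm_eq_abs, sq_abs, sq_abs]
  ring

variable {r : ℝ} {P : Set (EuclideanSpace ℝ (Fin d))}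

theorem mem_ballBody {y : EuclideanSpace ℝ (Fin d)} : y ∈ ballBody r P ↔ ∀ x ∈ P, dist y x ≤ r := by
  simp [ballBody]

theorem mem_ballBody_iff_subset_closedBall {y : EuclideanSpace ℝ (Fin d)} :
    y ∈ ballBody r P ↔ P ⊆ closedBall y r := by
  simp [mem_ballBody, subset_def, dist_comm]

theorem convex_ballBody (r : ℝ) (P : Set (EuclideanSpace ℝ (Fin d))) : Convex ℝ (ballBody r P) :=
  convex_iInter₂ fun x _ ↦ convex_closedBall x r

theorem isCompact_ballBody (hP : P.Nonempty) : IsCompact (ballBody r P) := by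
  obtain ⟨x, hx⟩ := hP
  exact (isCompact_closedBall x r).of_isClosed_subset
    (isClosed_biInter fun x _ ↦ isClosed_closedBall) (biInter_subset_of_mem hx)

theorem ballHull_eq_ballBody_ballBody (r : ℝ) (P : Set (EuclideanSpace ℝ (Fin d))) :
    ballHull r P = ballBody r (ballBody r P) := by
  simp only [ballHull, ← mem_ballBody_iff_subset_closedBall, ofPred_mem_eq]
  rfl

theorem mem_ballHull {x : EuclideanSpace ℝ (Fin d)} :
    x ∈ ballHull r P ↔ ∀ y ∈ ballBody r P, dist x y ≤ r := by
  rw [ballHull_eq_ballBody_ballBody, mem_ballBody]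

theorem subset_ballHull : P ⊆ ballHull r P :=
  subset_iInter₂ fun _ hy ↦ hy

theorem convex_ballHull (r : ℝ) (P : Set (EuclideanSpace ℝ (Fin d))) : Convex ℝ (ballHull r P) :=
  convex_iInter₂ fun y _ ↦ convex_closedBall y r

theorem isCompact_ballHull (hP : (ballBody r P).Nonempty) : IsCompact (ballHull r P) :=
  ballHull_eq_ballBody_ballBody r P ▸ isCompact_ballBody hP

theorem closedBall_lineMap_subset_ballBody (hr : 0 < r) {y z : EuclideanSpace ℝ (Fin d)}
    (hy : y ∈ ballBody r P) (hz : z ∈ ballBody r P) {s : ℝ} (hs : s ∈ Icc 0 1) :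
    closedBall (AffineMap.lineMap y z s) (s * (1 - s) * dist y z ^ 2 / (2 * r)) ⊆
      ballBody r P := by
  intro x hx
  refine mem_ballBody.2 fun c hc ↦ ?_
  have hyc := mem_ballBody.1 hy c hc
  have hzc := mem_ballBody.1 hz c hc
  have hs₀ := hs.1
  have hs₁ : 0 ≤ 1 - s := sub_nonneg.2 hs.2
  have hcenter : dist (AffineMap.lineMap y z s) c ^ 2 ≤ r ^ 2 - s * (1 - s) * dist y z ^ 2 := by
    calc dist (AffineMap.lineMap y z s) c ^ 2
        = (1 - s) * dist y c ^ 2 + s * dist z c ^ 2 - s * (1 - s) * dist y z ^ 2 :=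
          dist_lineMap_sq y z c s
      _ ≤ (1 - s) * r ^ 2 + s * r ^ 2 - s * (1 - s) * dist y z ^ 2 := by gcongr
      _ = r ^ 2 - s * (1 - s) * dist y z ^ 2 := by ring
  have hradius : 2 * r * dist x (AffineMap.lineMap y z s) ≤ s * (1 - s) * dist y z ^ 2 := by
    rw [mul_comm]
    exact (le_div_iff₀ (by positivity)).1 hx
  have htwo := two_mul_le_add_sq r (dist (AffineMap.lineMap y z s) c)
  have htri := dist_triangle x (AffineMap.lineMap y z s) c
  have hdist : 2 * r * dist x c ≤ 2 * r * r := calc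
    2 * r * dist x c
      ≤ 2 * r * (dist x (AffineMap.lineMap y z s) + dist (AffineMap.lineMap y z s) c) := by gcongr
    _ ≤ 2 * r * r := by linarith
  exact le_of_mul_le_mul_left hdist (by positivity)

theorem norm_sub_sq_le_of_isMinOn_inner (hr : 0 < r) {u y z : EuclideanSpace ℝ (Fin d)}
    (hu : ‖u‖ = 1) (hy : y ∈ ballBody r P) (hmin : IsMinOn (fun x ↦ ⟪u, x⟫) (ballBody r P) y)
    (hz : z ∈ ballBody r P) : ‖z - y‖ ^ 2 ≤ 2 * r * ⟪u, z - y⟫ := by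
  have hlt (s : ℝ) (hs : s ∈ Ioo 0 1) : (1 - s) * ‖z - y‖ ^ 2 ≤ 2 * r * ⟪u, z - y⟫ := by
    set ρ := s * (1 - s) * dist y z ^ 2 / (2 * r) with hρ
    have hρ_nonneg : 0 ≤ ρ := by
      have : 0 ≤ 1 - s := sub_nonneg.2 hs.2.le
      have := hs.1
      positivity
    have hmem : AffineMap.lineMap y z s - ρ • u ∈ ballBody r P :=
      closedBall_lineMap_subset_ballBody hr hy hz ⟨hs.1.le, hs.2.le⟩
        (by simp [norm_smul, hu, abs_of_nonneg hρ_nonneg, ← hρ])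
    have hinner : ⟪u, y⟫ ≤ s * ⟪u, z - y⟫ + ⟪u, y⟫ - ρ := by
      simpa [AffineMap.lineMap_apply_module', inner_sub_right, inner_add_right,
        real_inner_smul_right, hu] using hmin hmem
    have hρ_le : s * ((1 - s) * ‖z - y‖ ^ 2) ≤ s * (2 * r * ⟪u, z - y⟫) := by
      have hρr : ρ * (2 * r) = s * (1 - s) * ‖z - y‖ ^ 2 := by
        rw [hρ, div_mul_cancel₀ _ (by positivity), dist_comm, dist_eq_norm]
      nlinarith
    exact le_of_mul_le_mul_left hρ_le hs.1
  have hlim : Tendsto (fun s : ℝ ↦ (1 - s) * ‖z - y‖ ^ 2) (𝓝[>] 0) (𝓝 (‖z - y‖ ^ 2)) := by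
    have : Continuous fun s : ℝ ↦ (1 - s) * ‖z - y‖ ^ 2 := by fun_prop
    simpa using this.continuousWithinAt.tendsto (x := 0) (s := Ioi 0)
  exact le_of_tendsto hlim (by filter_upwards [Ioo_mem_nhdsGT one_pos] using hlt)

theorem add_smul_mem_ballHull (hr : 0 < r) {u y : EuclideanSpace ℝ (Fin d)} (hu : ‖u‖ = 1)
    (hy : y ∈ ballBody r P) (hmin : IsMinOn (fun x ↦ ⟪u, x⟫) (ballBody r P) y) :
    y + r • u ∈ ballHull r P := by
  refine mem_ballHull.2 fun z hz ↦ le_of_sq_le_sq ?_ hr.le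
  rw [dist_comm, dist_eq_norm, ← sub_sub, norm_sub_sq_real, real_inner_smul_right, norm_smul, hu,
    real_inner_comm, Real.norm_of_nonneg hr.le]
  linarith [norm_sub_sq_le_of_isMinOn_inner hr hu hy hmin hz]

theorem ballHull_sub_ballBody [NeZero d] (hr : 0 < r) (hP : P.Nonempty)
    (hB : (ballBody r P).Nonempty) : ballHull r P - ballBody r P = closedBall 0 r := by
  refine Subset.antisymm ?_ ?_
  · rintro _ ⟨x, hx, y, hy, rfl⟩
    simpa [dist_eq_norm] using mem_ballHull.1 hx y hy
  rw [← convexHull_sphere_eq_closedBall 0 hr.le]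
  refine convexHull_min (fun v hv ↦ ?_) ((convex_ballHull r P).sub (convex_ballBody r P))
  rw [mem_sphere_zero_iff_norm] at hv
  obtain ⟨y, hy, hmin⟩ := (isCompact_ballBody hP).exists_isMinOn hB
    (f := fun x ↦ ⟪r⁻¹ • v, x⟫) (by fun_prop)
  have hunit : ‖r⁻¹ • v‖ = 1 := by simp [norm_smul, hv, hr.ne', abs_of_pos hr]
  refine ⟨y + r • r⁻¹ • v, add_smul_mem_ballHull hr hunit hy hmin, y, hy, ?_⟩
  simp [hr.ne']

end BallBody

theorem first_intrinsic_volume_decomposition_general [NeZero d] {r : ℝ} (hr : 0 < r)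
    {P : Set (EuclideanSpace ℝ (Fin d))} (hP : P.Nonempty) (hB : (ballBody r P).Nonempty)
    {V : ℕ → Set (EuclideanSpace ℝ (Fin d)) → ℝ} (hV : IsIntrinsicVolumes d V) :
    V 1 (closedBall 0 r) = V 1 (ballHull r P) + V 1 (ballBody r P) := by
  rw [← ballHull_sub_ballBody hr hP hB]
  exact hV.apply_one_sub (convex_ballHull r P) (isCompact_ballHull hB)
    (hP.mono subset_ballHull) (convex_ballBody r P) (isCompact_ballBody hP) hB

/-- In the plane, V₁(B[o,r]) = V₁(conv_r P) + V₁(P^r). -/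
theorem first_intrinsic_volume_decomposition (r r₀ : ℝ) (hr : r₀ < r) (hr₀ : 0 < r₀)
    (P : Set (EuclideanSpace ℝ (Fin 2))) (hPfin : P.Finite) (hPne : P.Nonempty)
    (hcr : IsLeast {ρ : ℝ | ∃ cc : EuclideanSpace ℝ (Fin 2), P ⊆ closedBall cc ρ} r₀)
    (hhull : (ballHull r P).Nonempty)
    (V : ℕ → Set (EuclideanSpace ℝ (Fin 2)) → ℝ) (hV : IsIntrinsicVolumes 2 V) :
    V 1 (closedBall (0 : EuclideanSpace ℝ (Fin 2)) r) =
      V 1 (ballHull r P) + V 1 (ballBody r P) := by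
  obtain ⟨c, hc⟩ := hcr.1
  exact first_intrinsic_volume_decomposition_general (hr₀.trans hr) hPne
    ⟨c, mem_ballBody_iff_subset_closedBall.2 (hc.trans (closedBall_subset_closedBall hr.le))⟩ hV
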